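/- Consider a 2×2 zero-sum game with payoff matrix entries u11, u12, u21, u22, whose set of Nash equilibria S is a singleton {(p*, q*)}. Then (p*, q*) = (0, 1) if and only if u22 > u21 > u11. Furthermore, in that case the equilibrium payoff is u(p*, q*) = u21. -/

import Mathlib

/-- Expected payoff of the 2×2 zero-sum game with payoff matrix entries
`u11, u12, u21, u22`, when Player 1 plays its first action with probability `p`
and Player 2 plays its first action with probability `q`. -/
noncomputable def payoff (u11 u12 u21 u22 p q : ℝ) : ℝ :=
  u11 * p * q + u12 * p * (1 - q) + u21 * (1 - p) * q + u22 * (1 - p) * (1 - q)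

/-- `(p, q)` is a Nash equilibrium of the 2×2 zero-sum game. -/
def IsNE (u11 u12 u21 u22 p q : ℝ) : Prop :=
  p ∈ Set.Icc (0 : ℝ) 1 ∧ q ∈ Set.Icc (0 : ℝ) 1 ∧
    (∀ p' ∈ Set.Icc (0 : ℝ) 1, payoff u11 u12 u21 u22 p' q ≤ payoff u11 u12 u21 u22 p q) ∧
    (∀ q' ∈ Set.Icc (0 : ℝ) 1, payoff u11 u12 u21 u22 p q ≤ payoff u11 u12 u21 u22 p q')

lemma isNE_of_pure (u11 u12 u21 u22 p q : ℝ) (hp0 : 0 ≤ p) (hp1 : p ≤ 1) (hq0 : 0 ≤ q)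
    (hq1 : q ≤ 1)
    (h1 : payoff u11 u12 u21 u22 0 q ≤ payoff u11 u12 u21 u22 p q)
    (h2 : payoff u11 u12 u21 u22 1 q ≤ payoff u11 u12 u21 u22 p q)
    (h3 : payoff u11 u12 u21 u22 p q ≤ payoff u11 u12 u21 u22 p 0)
    (h4 : payoff u11 u12 u21 u22 p q ≤ payoff u11 u12 u21 u22 p 1) :
    IsNE u11 u12 u21 u22 p q := by
  refine ⟨⟨hp0, hp1⟩, ⟨hq0, hq1⟩, ?_, ?_⟩
  · rintro x ⟨hx0, hx1⟩
    have e : payoff u11 u12 u21 u22 x q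
        = x * payoff u11 u12 u21 u22 1 q + (1 - x) * payoff u11 u12 u21 u22 0 q := by
      unfold payoff; ring
    rw [e]
    nlinarith [mul_le_mul_of_nonneg_left h2 hx0,
      mul_le_mul_of_nonneg_left h1 (sub_nonneg.2 hx1)]
  · rintro x ⟨hx0, hx1⟩
    have e : payoff u11 u12 u21 u22 p x
        = x * payoff u11 u12 u21 u22 p 1 + (1 - x) * payoff u11 u12 u21 u22 p 0 := by
      unfold payoff; ring
    rw [e]
    nlinarith [mul_le_mul_of_nonneg_left h4 hx0,
      mul_le_mul_of_nonneg_left h3 (sub_nonneg.2 hx1)]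

/-- A weight `t ∈ (0,1]` with `0 ≤ d t + c (1 - t)` exists as soon as `c > 0`. -/
lemma exists_weight (c d : ℝ) (hc : 0 < c) :
    ∃ t : ℝ, 0 < t ∧ t ≤ 1 ∧ 0 ≤ d * t + c * (1 - t) := by
  have hd := abs_nonneg d
  have hpos : 0 < c + |d| := by linarith
  refine ⟨c / (c + |d|), by positivity, (div_le_one hpos).2 (by linarith), ?_⟩
  have e : d * (c / (c + |d|)) + c * (1 - c / (c + |d|)) = c * (d + |d|) / (c + |d|) := by
    field_simp
    ring
  rw [e]
  have : 0 ≤ d + |d| := by linarith [neg_abs_le d]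
  positivity

theorem stmt11 (u11 u12 u21 u22 p q : ℝ)
    (hS : {pq : ℝ × ℝ | IsNE u11 u12 u21 u22 pq.1 pq.2} = {(p, q)}) :
    ((p, q) = ((0 : ℝ), (1 : ℝ)) ↔ (u22 > u21 ∧ u21 > u11)) ∧
    ((u22 > u21 ∧ u21 > u11) → payoff u11 u12 u21 u22 p q = u21) := by
  have huniq : ∀ a b, IsNE u11 u12 u21 u22 a b → a = p ∧ b = q := by
    intro a b h
    have h' : (a, b) ∈ {pq : ℝ × ℝ | IsNE u11 u12 u21 u22 pq.1 pq.2} := h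
    rw [hS] at h'
    simpa using h'
  have hne : IsNE u11 u12 u21 u22 p q := by
    have h' : (p, q) ∈ {pq : ℝ × ℝ | IsNE u11 u12 u21 u22 pq.1 pq.2} := by rw [hS]; rfl
    exact h'
  have hback : (u22 > u21 ∧ u21 > u11) → 0 = p ∧ 1 = q := by
    rintro ⟨h1, h2⟩
    apply huniq
    apply isNE_of_pure <;> first | norm_num; done | (unfold payoff; linarith)
  refine ⟨⟨?_, ?_⟩, ?_⟩
  · intro h
    obtain ⟨rfl, rfl⟩ := Prod.mk.inj h
    obtain ⟨-, -, ha, hb⟩ := hne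
    have ha' := ha 1 (by simp)
    have hb' := hb 0 (by simp)
    have h1 : u11 ≤ u21 := by unfold payoff at ha'; linarith
    have h2 : u21 ≤ u22 := by unfold payoff at hb'; linarith
    have h3 : u11 < u21 ∨ u11 = u21 := lt_or_eq_of_le h1
    have h4 : u21 < u22 ∨ u21 = u22 := lt_or_eq_of_le h2
    rcases h3 with h3 | h3
    · rcases h4 with h4 | h4
      · exact ⟨h4, h3⟩
      · exfalso
        obtain ⟨t, ht0, ht1, ht⟩ := exists_weight (u21 - u11) (u21 - u12) (by linarith)
        have := (huniq 0 (1 - t) (by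
          subst h4
          apply isNE_of_pure <;> first | linarith | (unfold payoff; linarith))).2
        linarith
    · exfalso
      rcases h4 with h4 | h4
      · obtain ⟨t, ht0, ht1, ht⟩ := exists_weight (u22 - u21) (u12 - u21) (by linarith)
        have := (huniq t 1 (by
          subst h3
          apply isNE_of_pure <;> first | linarith | (unfold payoff; linarith))).1
        linarith
      · subst h3 h4
        rcases le_total u12 u11 with h5 | h5
        · have := (huniq 0 0 (by
            apply isNE_of_pure <;> first | linarith | (unfold payoff; linarith))).2
          linarith
        · have := (huniq 1 1 (by
            apply isNE_of_pure <;> first | linarith | (unfold payoff; linarith))).1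
          linarith
  · intro h
    obtain ⟨rfl, rfl⟩ := hback h
    rfl
  · intro h
    obtain ⟨rfl, rfl⟩ := hback h
    unfold payoff; ring
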